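/- arXiv:1408.2559 — 2 statements merged into one kernel-verified Lean document; each statement's English description precedes it below -/
import Mathlib

section
/- Let n > k > t ≥ 1 be integers and let 𝓕 be a maximal t-intersecting k-uniform hypergraph on [n]. Then there exists a subfamily 𝓕₀ ⊆ 𝓕 with |𝓕₀| ≤ binom(2(k−t)+1, k−t) such that 𝓕 = {G : G is a k-element subset of [n] with |G ∩ F| ≥ t for all F ∈ 𝓕₀}. -/
/-- A family of edges forms a `k`-uniform hypergraph on `[n]`. -/
def IsKUniform (n k : ℕ) (H : Finset (Finset (Fin n))) : Prop :=
  ∀ e ∈ H, e.card = k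

/-- A hypergraph is `t`-intersecting if any two of its edges share at least `t` vertices. -/
def IsTIntersectingHyp (n t : ℕ) (H : Finset (Finset (Fin n))) : Prop :=
  ∀ e ∈ H, ∀ f ∈ H, t ≤ (e ∩ f).card

open Module

/-- The alternating map obtained from a determinant by fixing the first block of columns. -/
noncomputable def detRight {E : Type*} [AddCommGroup E] [Module ℝ E] {p : ℕ}
    (b : Basis (Fin p ⊕ Fin p) ℝ E) (u : Fin p → E) : E [⋀^Fin p]→ₗ[ℝ] ℝ where
  toFun w := b.det (Sum.elim u w)
  map_update_add' := by
    intro inst w i x y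
    have h := fun z => @Sum.elim_update_right _ _ _ _ inst u w i z
    have e : inst = instDecidableEqFin p := Subsingleton.elim _ _
    subst e
    simp only [Sum.elim_update_right, AlternatingMap.map_update_add]
  map_update_smul' := by
    intro inst w i c x
    have e : inst = instDecidableEqFin p := Subsingleton.elim _ _
    subst e
    simp only [Sum.elim_update_right, AlternatingMap.map_update_smul]
  map_eq_zero_of_eq' := by
    intro w i j hij hne
    exact b.det.map_eq_zero_of_eq (Sum.elim u w) (i := Sum.inr i) (j := Sum.inr j)
      (by simpa using hij) (by simpa using hne)

theorem triangular_independent {ι W : Type*} [Fintype ι] [AddCommGroup W] [Module ℝ W]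
    (r : ι → ℕ) (w : ι → W) (φ : ι → W →ₗ[ℝ] ℝ) (h1 : ∀ i, φ i (w i) ≠ 0)
    (h2 : ∀ i j, i ≠ j → r i ≤ r j → φ i (w j) = 0) : LinearIndependent ℝ w := by
  rw [Fintype.linearIndependent_iff]
  intro c hc
  have key : ∀ m, ∀ i, r i = m → c i = 0 := by
    intro m
    induction m using Nat.strong_induction_on with
    | _ m ih =>
      intro i hi
      have h := congrArg (φ i) hc
      rw [map_sum, map_zero, Finset.sum_eq_single i] at h
      · rw [map_smul, smul_eq_mul] at h
        exact (mul_eq_zero.1 h).resolve_right (h1 i)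
      · intro j _ hj
        rw [map_smul, smul_eq_mul]
        by_cases hr : r i ≤ r j
        · rw [h2 i j hj.symm hr, mul_zero]
        · rw [ih (r j) (by omega) j rfl, zero_mul]
      · simp
  exact fun i => key _ i rfl

/-- Skew Bollobás theorem for vector systems. -/
theorem skew_vectors {ι E : Type*} [Fintype ι] [AddCommGroup E] [Module ℝ E]
    [FiniteDimensional ℝ E] {p : ℕ} (hE : finrank ℝ E = 2 * p) (r : ι → ℕ)
    (u v : ι → Fin p → E) (h1 : ∀ i, LinearIndependent ℝ (Sum.elim (u i) (v i)))
    (h2 : ∀ i j, i ≠ j → r i ≤ r j → ¬ LinearIndependent ℝ (Sum.elim (u i) (v j))) :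
    Fintype.card ι ≤ (2 * p).choose p := by
  let b : Basis (Fin p ⊕ Fin p) ℝ E :=
    (finBasisOfFinrankEq ℝ E hE).reindex
      ((finCongr (by omega)).trans finSumFinEquiv.symm)
  have hli : LinearIndependent ℝ (fun j => exteriorPower.ιMulti ℝ p (v j)) := by
    refine triangular_independent r _
      (fun i => exteriorPower.alternatingMapLinearEquiv (detRight b (u i))) ?_ ?_
    · intro i
      rw [exteriorPower.alternatingMapLinearEquiv_apply_ιMulti]
      change b.det (Sum.elim (u i) (v i)) ≠ 0
      have := (b.is_basis_iff_det (v := Sum.elim (u i) (v i))).1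
        ⟨h1 i, (h1 i).span_eq_top_of_card_eq_finrank' (by simp [hE]; omega)⟩
      exact this.ne_zero
    · intro i j hij hr
      rw [exteriorPower.alternatingMapLinearEquiv_apply_ιMulti]
      change b.det (Sum.elim (u i) (v j)) = 0
      exact b.det.map_linearDependent _ (h2 i j hij hr)
  have := hli.fintype_card_le_finrank
  rwa [exteriorPower.finrank_eq, hE] at this

theorem common_disjoint {ι V : Type*} [Fintype ι] [AddCommGroup V] [Module ℝ V]
    [FiniteDimensional ℝ V] {N : ℕ} (X : ι → Submodule ℝ V) (hX : ∀ i, finrank ℝ (X i) = N)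
    (d : ℕ) (hd : d + N ≤ finrank ℝ V) :
    ∃ C : Submodule ℝ V, finrank ℝ C = d ∧ ∀ i, Disjoint (X i) C := by
  induction d with
  | zero => exact ⟨⊥, by simp, fun i => disjoint_bot_right⟩
  | succ d ih =>
    obtain ⟨C, hC, hdis⟩ := ih (by omega)
    have hne : ∀ i : Option ι, (i.elim C (fun i => X i ⊔ C)) ≠ ⊤ := by
      intro i h
      cases i with
      | none =>
        simp only [Option.elim] at h
        have := finrank_top ℝ V
        rw [← h] at this
        omega
      | some i =>
        simp only [Option.elim] at h
        have := finrank_top ℝ V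
        rw [← h] at this
        have h3 := Submodule.finrank_add_le_finrank_add_finrank (X i) C
        have := hX i
        omega
    obtain ⟨x, hx⟩ := Submodule.exists_forall_notMem_of_forall_ne_top _ hne
    have hxC : x ∉ C := hx none
    refine ⟨C ⊔ Submodule.span ℝ {x}, ?_, ?_⟩
    · have hx0 : x ≠ 0 := fun h => hxC (h ▸ C.zero_mem)
      have hdj : Disjoint C (Submodule.span ℝ {x}) := by
        rw [Submodule.disjoint_span_singleton' hx0]
        exact hxC
      have := Submodule.finrank_sup_add_finrank_inf_eq C (Submodule.span ℝ {x})
      rw [hdj.eq_bot, finrank_bot, finrank_span_singleton hx0] at this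
      omega
    · intro i
      have hxi : x ∉ X i ⊔ C := hx (some i)
      have hx0 : x ≠ 0 := fun h => hxC (h ▸ C.zero_mem)
      have hdj : Disjoint (X i ⊔ C) (Submodule.span ℝ {x}) := by
        rw [Submodule.disjoint_span_singleton' hx0]
        exact hxi
      exact (hdis i).disjoint_sup_right_of_disjoint_sup_left hdj

/-- Skew Bollobás theorem for subspaces. -/
theorem skew_subspaces {ι V : Type*} [Fintype ι] [AddCommGroup V] [Module ℝ V]
    [FiniteDimensional ℝ V] {p : ℕ} (r : ι → ℕ) (A B : ι → Submodule ℝ V)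
    (hA : ∀ i, finrank ℝ (A i) = p) (hB : ∀ i, finrank ℝ (B i) = p)
    (h1 : ∀ i, Disjoint (A i) (B i))
    (h2 : ∀ i j, i ≠ j → r i ≤ r j → ¬ Disjoint (A i) (B j)) :
    Fintype.card ι ≤ (2 * p).choose p := by
  rcases isEmpty_or_nonempty ι with hι | ⟨⟨i0⟩⟩
  · simp
  have hX : ∀ i, finrank ℝ ↥(A i ⊔ B i) = 2 * p := by
    intro i
    have := Submodule.finrank_sup_add_finrank_inf_eq (A i) (B i)
    rw [(h1 i).eq_bot, finrank_bot, hA, hB] at this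
    omega
  have hle : 2 * p ≤ finrank ℝ V := (hX i0) ▸ Submodule.finrank_le _
  obtain ⟨C, hC, hdis⟩ := common_disjoint (fun i => A i ⊔ B i) hX (finrank ℝ V - 2 * p) (by omega)
  let a : ι → Fin p → V := fun i k => (finBasisOfFinrankEq ℝ (A i) (hA i) k : V)
  let b : ι → Fin p → V := fun i k => (finBasisOfFinrankEq ℝ (B i) (hB i) k : V)
  have hal : ∀ i, LinearIndependent ℝ (a i) := fun i =>
    (finBasisOfFinrankEq ℝ (A i) (hA i)).linearIndependent.map' (A i).subtype (A i).ker_subtype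
  have hbl : ∀ i, LinearIndependent ℝ (b i) := fun i =>
    (finBasisOfFinrankEq ℝ (B i) (hB i)).linearIndependent.map' (B i).subtype (B i).ker_subtype
  have sp : ∀ (S : Submodule ℝ V) (h : finrank ℝ S = p),
      Submodule.span ℝ (Set.range (fun k => (finBasisOfFinrankEq ℝ S h k : V))) = S := by
    intro S h
    have := congrArg (Submodule.map S.subtype) (finBasisOfFinrankEq ℝ S h).span_eq
    rw [Submodule.map_span, ← Set.range_comp, Submodule.map_subtype_top] at this
    exact this
  have hQ : finrank ℝ (V ⧸ C) = 2 * p := by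
    have := C.finrank_quotient_add_finrank
    omega
  refine skew_vectors hQ r (fun i => C.mkQ ∘ a i) (fun i => C.mkQ ∘ b i) ?_ ?_
  · intro i
    rw [← Sum.comp_elim]
    refine LinearIndependent.map (LinearIndependent.sum_type (hal i) (hbl i) ?_) ?_
    · rw [sp, sp]
      exact h1 i
    · rw [Set.Sum.elim_range, Submodule.span_union, sp, sp, Submodule.ker_mkQ]
      exact hdis i
  · intro i j hij hr hl
    rw [← Sum.comp_elim] at hl
    have h3 := (linearIndependent_sum.1 hl.of_comp).2.2
    simp only [Function.comp_def, Sum.elim_inl, Sum.elim_inr] at h3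
    rw [sp, sp] at h3
    exact h2 i j hij hr h3

/-- Vectors supported on `S` killed by the first `s` moments. -/
def mom (n s : ℕ) (S : Finset (Fin n)) : Submodule ℝ (Fin n → ℝ) where
  carrier := {x | (∀ v, v ∉ S → x v = 0) ∧ ∀ i : Fin s, ∑ v, x v * (v : ℝ) ^ (i : ℕ) = 0}
  zero_mem' := by simp
  add_mem' := by
    rintro x y ⟨hx, hx'⟩ ⟨hy, hy'⟩
    refine ⟨fun v hv => by simp [hx v hv, hy v hv], fun i => ?_⟩
    simp only [Pi.add_apply, add_mul, Finset.sum_add_distrib, hx', hy', add_zero]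
  smul_mem' := by
    rintro c x ⟨hx, hx'⟩
    refine ⟨fun v hv => by simp [hx v hv], fun i => ?_⟩
    simp only [Pi.smul_apply, smul_eq_mul, mul_assoc, ← Finset.mul_sum, hx', mul_zero]

theorem mom_inf (n s : ℕ) (S T : Finset (Fin n)) : mom n s S ⊓ mom n s T = mom n s (S ∩ T) := by
  ext x
  constructor
  · rintro ⟨⟨h1, h2⟩, ⟨h3, _⟩⟩
    refine ⟨fun v hv => ?_, h2⟩
    by_cases h : v ∈ S
    · exact h3 v (fun h' => hv (Finset.mem_inter.2 ⟨h, h'⟩))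
    · exact h1 v h
  · rintro ⟨h1, h2⟩
    exact ⟨⟨fun v hv => h1 v (fun h => hv (Finset.mem_inter.1 h).1), h2⟩,
      ⟨fun v hv => h1 v (fun h => hv (Finset.mem_inter.1 h).2), h2⟩⟩

theorem mom_mono (n s : ℕ) {S T : Finset (Fin n)} (h : S ⊆ T) : mom n s S ≤ mom n s T :=
  fun _ hx => ⟨fun v hv => hx.1 v (fun h' => hv (h h')), hx.2⟩

theorem mom_small (n s : ℕ) (S : Finset (Fin n)) (hS : S.card ≤ s) : mom n s S = ⊥ := by
  rw [eq_bot_iff]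
  rintro x ⟨h1, h2⟩
  rw [Submodule.mem_bot]
  funext u
  by_cases hu : u ∈ S
  swap
  · exact h1 u hu
  have hP : ∀ P : Polynomial ℝ, P.natDegree < s → ∑ v, x v * P.eval (v : ℝ) = 0 := by
    intro P hP
    simp_rw [Polynomial.eval_eq_sum_range' hP, Finset.mul_sum]
    rw [Finset.sum_comm]
    refine Finset.sum_eq_zero fun i hi => ?_
    have := h2 ⟨i, Finset.mem_range.1 hi⟩
    calc _ = P.coeff i * ∑ v, x v * (v : ℝ) ^ i := by
            rw [Finset.mul_sum]; exact Finset.sum_congr rfl fun v _ => by ring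
      _ = 0 := by rw [this, mul_zero]
  have h := hP (∏ w ∈ S.erase u, (Polynomial.X - Polynomial.C (w : ℝ))) (by
    rw [Polynomial.natDegree_prod_of_monic _ _ fun w _ => Polynomial.monic_X_sub_C _]
    simp only [Polynomial.natDegree_X_sub_C, Finset.sum_const, smul_eq_mul, mul_one]
    have := Finset.card_erase_lt_of_mem hu
    omega)
  rw [Finset.sum_eq_single u] at h
  · refine (mul_eq_zero.1 h).resolve_right ?_
    rw [Polynomial.eval_prod, ← ne_eq, Finset.prod_ne_zero_iff]
    intro w hw
    have : w ≠ u := (Finset.mem_erase.1 hw).1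
    simp only [Polynomial.eval_sub, Polynomial.eval_X, Polynomial.eval_C]
    intro h0
    have h0 : (u : ℝ) = w := by linarith
    exact this (Fin.ext (by exact_mod_cast h0.symm))
  · intro v _ hv
    by_cases hvS : v ∈ S
    · rw [Polynomial.eval_prod, Finset.prod_eq_zero (Finset.mem_erase.2 ⟨hv, hvS⟩), mul_zero]
      simp
    · rw [h1 v hvS, zero_mul]
  · simp

theorem mom_finrank_ge (n s : ℕ) (S : Finset (Fin n)) : S.card ≤ finrank ℝ (mom n s S) + s := by
  let g : (S → ℝ) →ₗ[ℝ] (Fin n → ℝ) := Function.ExtendByZero.linearMap ℝ (Subtype.val : S → Fin n)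
  have hg : Function.Injective g := by
    intro x y h
    funext v
    have := congrFun h v
    simpa [g, Function.ExtendByZero.linearMap_apply, Subtype.val_injective.extend_apply] using this
  let m : (Fin n → ℝ) →ₗ[ℝ] (Fin s → ℝ) :=
    LinearMap.pi fun i => ∑ v : Fin n, (((v : ℕ) : ℝ) ^ (i : ℕ)) • LinearMap.proj v
  have hrn := (m ∘ₗ g).finrank_range_add_finrank_ker
  have h1 : finrank ℝ (LinearMap.range (m ∘ₗ g)) ≤ s := by
    simpa using Submodule.finrank_le (LinearMap.range (m ∘ₗ g))
  have h2 : finrank ℝ (LinearMap.ker (m ∘ₗ g)) ≤ finrank ℝ (mom n s S) := by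
    rw [(Submodule.equivMapOfInjective g hg (LinearMap.ker (m ∘ₗ g))).finrank_eq]
    refine Submodule.finrank_mono ?_
    rintro _ ⟨x, hx, rfl⟩
    refine ⟨fun v hv => ?_, fun i => ?_⟩
    · simp only [g, Function.ExtendByZero.linearMap_apply]
      rw [Function.extend_apply' _ _ _ (by rintro ⟨a, rfl⟩; exact hv a.2)]
      rfl
    · have := congrFun (LinearMap.mem_ker.1 hx) i
      simp only [m, LinearMap.comp_apply, LinearMap.pi_apply, LinearMap.sum_apply,
        LinearMap.smul_apply, LinearMap.proj_apply, smul_eq_mul, Pi.zero_apply] at this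
      rw [← this]
      exact Finset.sum_congr rfl fun v _ => mul_comm _ _
  simp only [finrank_fintype_fun_eq_card, Fintype.card_coe] at hrn
  omega

theorem mom_finrank (n s : ℕ) (S : Finset (Fin n)) (hS : s ≤ S.card) :
    finrank ℝ (mom n s S) = S.card - s := by
  apply le_antisymm
  · obtain ⟨T, hT, hTc⟩ := Finset.exists_subset_card_eq hS
    have hd : Disjoint (mom n s S) (mom n 0 T) := by
      rw [disjoint_iff, eq_bot_iff, ← mom_small n s T hTc.le]
      rintro x ⟨hx, hy⟩
      exact ⟨hy.1, hx.2⟩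
    have h0 := mom_finrank_ge n 0 T
    have h1 := Submodule.finrank_sup_add_finrank_inf_eq (mom n s S) (mom n 0 T)
    rw [hd.eq_bot, finrank_bot] at h1
    have h2 : finrank ℝ ↥(mom n s S ⊔ mom n 0 T) ≤ S.card := by
      let f : ↥(mom n s S ⊔ mom n 0 T) →ₗ[ℝ] (S → ℝ) :=
        (LinearMap.funLeft ℝ ℝ (Subtype.val : S → Fin n)) ∘ₗ Submodule.subtype _
      have hf : Function.Injective f := by
        have hsub : mom n s S ⊔ mom n 0 T ≤ mom n 0 S :=
          sup_le (fun x hx => ⟨hx.1, fun i => i.elim0⟩) (mom_mono n 0 hT)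
        rw [← LinearMap.ker_eq_bot, eq_bot_iff]
        rintro ⟨x, hx⟩ h
        rw [Submodule.mem_bot]
        ext v
        by_cases hv : v ∈ S
        · exact congrFun (LinearMap.mem_ker.1 h) ⟨v, hv⟩
        · exact (hsub hx).1 v hv
      simpa using LinearMap.finrank_le_finrank_of_injective hf
    omega
  · have := mom_finrank_ge n s S
    omega

/-- Füredi's threshold version of the skew Bollobás theorem. -/
theorem skew_threshold {ι : Type*} [Fintype ι] (n k s : ℕ) (hs : s ≤ k) (r : ι → ℕ)
    (A B : ι → Finset (Fin n)) (hA : ∀ i, (A i).card = k) (hB : ∀ i, (B i).card = k)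
    (h1 : ∀ i, (A i ∩ B i).card ≤ s)
    (h2 : ∀ i j, i ≠ j → r i ≤ r j → s < (A i ∩ B j).card) :
    Fintype.card ι ≤ (2 * (k - s)).choose (k - s) := by
  refine skew_subspaces r (fun i => mom n s (A i)) (fun i => mom n s (B i)) ?_ ?_ ?_ ?_
  · intro i
    rw [mom_finrank _ _ _ (by rw [hA]; exact hs), hA]
  · intro i
    rw [mom_finrank _ _ _ (by rw [hB]; exact hs), hB]
  · intro i
    rw [disjoint_iff, mom_inf, mom_small _ _ _ (h1 i)]
  · intro i j hij hr h
    have h3 := h2 i j hij hr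
    rw [disjoint_iff, mom_inf] at h
    have h4 := mom_finrank_ge n s (A i ∩ B j)
    rw [h, finrank_bot] at h4
    omega

theorem maximal_t_intersecting_hypergraph_has_small_generating_set
    (n k t : ℕ) (ht : 1 ≤ t) (htk : t < k) (hkn : k < n)
    (F : Finset (Finset (Fin n))) (hunif : IsKUniform n k F)
    (hF : IsTIntersectingHyp n t F)
    (hmax : ∀ H : Finset (Finset (Fin n)), IsKUniform n k H →
      IsTIntersectingHyp n t H → F ⊆ H → F = H) :
    ∃ F₀ ⊆ F, F₀.card ≤ (2 * (k - t) + 1).choose (k - t) ∧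
      ∀ G : Finset (Fin n), G ∈ F ↔ (G.card = k ∧ ∀ e ∈ F₀, t ≤ (G ∩ e).card) := by
  classical
  let P : Finset (Finset (Fin n)) → Prop := fun F₀ =>
    ∀ G : Finset (Fin n), G.card = k → (∀ e ∈ F₀, t ≤ (G ∩ e).card) → G ∈ F
  have hPF : P F := by
    intro G hG hGF
    have h := hmax (insert G F) ?_ ?_ (Finset.subset_insert _ _)
    · rw [h]; exact Finset.mem_insert_self _ _
    · intro e he
      rcases Finset.mem_insert.1 he with rfl | he
      · exact hG
      · exact hunif e he
    · intro e he f hf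
      rcases Finset.mem_insert.1 he with rfl | he2
      · rcases Finset.mem_insert.1 hf with rfl | hf
        · rw [Finset.inter_self]; omega
        · exact hGF f hf
      · rcases Finset.mem_insert.1 hf with rfl | hf
        · rw [Finset.inter_comm]; exact hGF e he2
        · exact hF e he2 f hf
  obtain ⟨F₀, hF₀, hmin⟩ := Finset.exists_min_image (F.powerset.filter P) Finset.card
    ⟨F, Finset.mem_filter.2 ⟨Finset.mem_powerset_self F, hPF⟩⟩
  rw [Finset.mem_filter, Finset.mem_powerset] at hF₀
  obtain ⟨hsub, hP⟩ := hF₀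
  refine ⟨F₀, hsub, ?_, fun G => ⟨fun hG => ⟨hunif G hG, fun e he => hF G hG e (hsub he)⟩,
    fun h => hP G h.1 h.2⟩⟩
  have hex : ∀ e : F₀, ∃ G : Finset (Fin n), G.card = k ∧ (G ∩ e.1).card < t ∧
      ∀ f ∈ F₀, f ≠ e.1 → t ≤ (G ∩ f).card := by
    rintro ⟨e, he⟩
    by_contra! hcon
    have hPe : P (F₀.erase e) := by
      intro G hG hGe
      have hGe' : ∀ f ∈ F₀, f ≠ e → t ≤ (G ∩ f).card :=
        fun f hf hne => hGe f (Finset.mem_erase.2 ⟨hne, hf⟩)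
      refine hP G hG fun f hf => ?_
      by_cases hfe : f = e
      · subst hfe
        by_contra hlt
        obtain ⟨f', h1, h2, h3⟩ := hcon G hG (by simpa using hlt)
        exact absurd (hGe' f' h1 h2) (by omega)
      · exact hGe' f hf hfe
    have := hmin (F₀.erase e) (Finset.mem_filter.2
      ⟨Finset.mem_powerset.2 ((Finset.erase_subset _ _).trans hsub), hPe⟩)
    have := Finset.card_erase_lt_of_mem he
    omega
  choose g hgk hgt hgf using hex
  have key := skew_threshold (ι := F₀ ⊕ F₀) n k (t - 1) (by omega)
    (Sum.elim (fun _ => 0) (fun _ => 1))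
    (Sum.elim (fun e => e.1) g) (Sum.elim g (fun e => e.1)) ?_ ?_ ?_ ?_
  · rw [Fintype.card_sum, Fintype.card_coe] at key
    have e1 : k - (t - 1) = (k - t) + 1 := by omega
    have e2 : 2 * (k - t + 1) = (2 * (k - t) + 1) + 1 := by ring
    rw [e1, e2, Nat.choose_succ_succ] at key
    have e3 : (2 * (k - t) + 1).choose (k - t + 1) = (2 * (k - t) + 1).choose (k - t) :=
      Nat.choose_symm_half (k - t)
    simp only [Nat.succ_eq_add_one] at key
    omega
  · rintro (e | e)
    · exact hunif _ (hsub e.2)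
    · exact hgk e
  · rintro (e | e)
    · exact hgk e
    · exact hunif _ (hsub e.2)
  · rintro (e | e)
    · have := hgt e
      simp only [Sum.elim_inl]
      rw [Finset.inter_comm]; omega
    · have := hgt e
      simp only [Sum.elim_inr]
      omega
  · rintro (e | e) (f | f) hne hr
    · have hef : e.1 ≠ f.1 := fun h => hne (by rw [Subtype.ext h])
      have := hgf f e.1 e.2 hef
      simp only [Sum.elim_inl]
      rw [Finset.inter_comm]; omega
    · have := hF e.1 (hsub e.2) f.1 (hsub f.2)
      simp only [Sum.elim_inl, Sum.elim_inr]
      omega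
    · simp at hr
    · have hef : f.1 ≠ e.1 := fun h => hne (by rw [Subtype.ext h])
      have := hgf e f.1 f.2 hef
      simp only [Sum.elim_inr]
      omega
end

section
/- Let q be a prime power, let n > k ≥ 1 be integers, and let 𝓕 be a maximal intersecting family of k-dimensional subspaces of 𝔽_q^n. Then there exists a subfamily 𝓕₀ ⊆ 𝓕 with |𝓕₀| ≤ binom(2k−1, k−1) such that 𝓕 = {W : W is a k-dimensional subspace of 𝔽_q^n with dim(W ∩ U) ≥ 1 for all U ∈ 𝓕₀}. -/
/-- A family of subspaces is intersecting if any two of its members meet in a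
subspace of dimension at least 1. -/
def IsIntersectingFam {K : Type*} [Field K] {n : ℕ}
    (𝓕 : Finset (Submodule K (Fin n → K))) : Prop :=
  ∀ U ∈ 𝓕, ∀ V ∈ 𝓕, 1 ≤ Module.finrank K ↥(U ⊓ V)

open Matrix in
/-- The alternating form `a ↦ det (a | b)`. -/
def detForm {R : Type*} [CommRing R] {k : ℕ} (b : Fin k → (Fin k ⊕ Fin k → R)) :
    (Fin k ⊕ Fin k → R) [⋀^Fin k]→ₗ[R] R where
  toFun a := Matrix.detRowAlternating (Sum.elim a b)
  map_update_add' m i x y := by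
    classical
    have h : ∀ z, Sum.elim (@Function.update _ _ ‹_› m i z) b
        = Function.update (Sum.elim m b) (Sum.inl i) z := by
      intro z
      rw [Sum.update_elim_inl]
    rw [h, h, h, AlternatingMap.map_update_add]
  map_update_smul' m i c x := by
    classical
    have h : ∀ z, Sum.elim (@Function.update _ _ ‹_› m i z) b
        = Function.update (Sum.elim m b) (Sum.inl i) z := by
      intro z
      rw [Sum.update_elim_inl]
    rw [h, h, AlternatingMap.map_update_smul]
  map_eq_zero_of_eq' v i j h hij := by
    apply AlternatingMap.map_eq_zero_of_eq _ _ (i := Sum.inl i) (j := Sum.inl j)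
    · simpa using h
    · simpa using hij

/-- A linearly independent family of alternating forms has bounded size. -/
theorem card_le_of_linInd_alternating {R : Type*} [CommRing R] [Nontrivial R] {k : ℕ}
    {J : Type*} [Fintype J] {ι : Type*} [Fintype ι] [DecidableEq ι]
    (f : J → (ι → R) [⋀^Fin k]→ₗ[R] R) (hf : LinearIndependent R f) :
    Fintype.card J ≤ (Fintype.card ι).choose k := by
  classical
  let e : (s : {s : Finset ι // s.card = k}) → Fin k → ι :=
    fun s i => ((s.1.equivFinOfCardEq s.2).symm i : ι)
  let Φ : ((ι → R) [⋀^Fin k]→ₗ[R] R) →ₗ[R] ({s : Finset ι // s.card = k} → R) :=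
    { toFun := fun g s => g (fun i => Pi.basisFun R ι (e s i))
      map_add' := fun _ _ => rfl
      map_smul' := fun _ _ => rfl }
  have hΦ : LinearMap.ker Φ = ⊥ := by
    rw [LinearMap.ker_eq_bot']
    intro g hg
    refine Module.Basis.ext_alternating (Pi.basisFun R ι) ?_
    intro v hv
    let s : {s : Finset ι // s.card = k} :=
      ⟨Finset.univ.image v, by rw [Finset.card_image_of_injective _ hv]; simp⟩
    let τ : Fin k → Fin k := fun i => s.1.equivFinOfCardEq s.2 ⟨v i, by simp [s]⟩
    have hτ : Function.Injective τ := by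
      intro i j hij
      have := (s.1.equivFinOfCardEq s.2).injective hij
      exact hv (by simpa using this)
    let σ : Equiv.Perm (Fin k) := Equiv.ofBijective τ (Finite.injective_iff_bijective.1 hτ)
    have h1 : (fun i => Pi.basisFun R ι (v i))
        = (fun i => Pi.basisFun R ι (e s i)) ∘ σ := by
      funext i
      simp [e, σ, τ]
    rw [h1, AlternatingMap.map_perm]
    have h2 : g (fun i => Pi.basisFun R ι (e s i)) = 0 := congrFun hg s
    rw [h2]
    simp
  have := (hf.map' Φ hΦ).fintype_card_le_finrank
  simpa using this

/-- The images of vectors of `K^n` under the generic matrix. -/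
noncomputable def genMat {K : Type*} [Field K] {n : ℕ} (ι : Type*) {κ : Type*}
    (N : κ → Fin n → K) : Matrix κ ι (MvPolynomial (Fin n × ι) K) :=
  let A : Matrix κ (Fin n) (MvPolynomial (Fin n × ι) K) := (Matrix.of N).map MvPolynomial.C
  let B : Matrix (Fin n) ι (MvPolynomial (Fin n × ι) K) := Matrix.mvPolynomialX (Fin n) ι K
  A * B

/-- The generic determinant of `2k` vectors of `K^n`. -/
noncomputable def genDet {K : Type*} [Field K] {n : ℕ} {ι : Type*} [Fintype ι] [DecidableEq ι]
    (N : ι → Fin n → K) : MvPolynomial (Fin n × ι) K :=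
  (genMat ι N).det

theorem genDet_ne_zero_iff {K : Type*} [Field K] {n : ℕ} {ι : Type*} [Fintype ι] [DecidableEq ι]
    (N : ι → Fin n → K) : genDet N ≠ 0 ↔ LinearIndependent K N := by
  constructor
  · intro h
    by_contra hN
    apply h
    rw [Fintype.not_linearIndependent_iff] at hN
    obtain ⟨g, hg, i, hi⟩ := hN
    rw [genDet, ← Matrix.exists_vecMul_eq_zero_iff]
    refine ⟨fun i => MvPolynomial.C (g i), ?_, ?_⟩
    · intro h0
      exact hi (by simpa using congrFun h0 i)
    · rw [genMat, ← Matrix.vecMul_vecMul]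
      have : Matrix.vecMul (fun i => (MvPolynomial.C (g i) : MvPolynomial (Fin n × ι) K))
          ((Matrix.of N).map MvPolynomial.C) = 0 := by
        funext j
        have := congrFun hg j
        simp only [Finset.sum_apply, Pi.smul_apply, smul_eq_mul, Pi.zero_apply] at this
        simp only [Matrix.vecMul, dotProduct, Matrix.map_apply, Matrix.of_apply, Pi.zero_apply]
        simp only [← map_mul, ← map_sum]
        rw [this, map_zero]
      rw [this, Matrix.zero_vecMul]
  · intro hN h0
    obtain ⟨g, hg⟩ := (Fintype.linearCombination K N).exists_leftInverse_of_injective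
      (LinearMap.ker_eq_bot.2 hN.fintypeLinearCombination_injective)
    let T : Matrix (Fin n) ι K := Matrix.of fun j i => g (Pi.single j 1) i
    have hgN : ∀ i, g (N i) = Pi.single i 1 := by
      intro i
      have := LinearMap.congr_fun hg (Pi.single i 1)
      simpa using this
    have hT : Matrix.of N * T = 1 := by
      ext i l
      rw [Matrix.mul_apply, Matrix.one_apply]
      have h := congrFun (hgN i) l
      rw [pi_eq_sum_univ' (N i), map_sum] at h
      simp only [map_smul, Finset.sum_apply, Pi.smul_apply, smul_eq_mul, Pi.single_apply] at h
      simp only [Matrix.of_apply, T, eq_comm (a := i), ← h]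
    have h1 := congrArg (MvPolynomial.eval (fun p : Fin n × ι => T p.1 p.2)) h0
    rw [genDet, genMat, RingHom.map_det, RingHom.mapMatrix_apply, Matrix.map_mul] at h1
    have h2 : ((Matrix.of N).map MvPolynomial.C).map
        (MvPolynomial.eval (fun p : Fin n × ι => T p.1 p.2)) = Matrix.of N := by
      ext; simp
    have h3 : (Matrix.mvPolynomialX (Fin n) ι K).map
        (MvPolynomial.eval (fun p : Fin n × ι => T p.1 p.2)) = T := by
      ext; simp
    rw [h2, h3, hT] at h1
    simp at h1

theorem genDet_eq_detForm {K : Type*} [Field K] {n k : ℕ} (u w : Fin k → Fin n → K) :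
    genDet (Sum.elim u w) =
      detForm (genMat (Fin k ⊕ Fin k) w) (genMat (Fin k ⊕ Fin k) u) := by
  change Matrix.det _ = Matrix.det _
  congr 1
  funext i j
  rcases i with i | i <;> rfl

theorem exists_frame {K : Type*} [Field K] {n k : ℕ} (U : Submodule K (Fin n → K)) :
    ∃ u : Fin k → Fin n → K, Module.finrank K U = k →
      LinearIndependent K u ∧ Submodule.span K (Set.range u) = U := by
  by_cases h : Module.finrank K U = k
  · let b := Module.finBasisOfFinrankEq K U h
    refine ⟨fun i => b i, fun _ => ⟨?_, ?_⟩⟩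
    · exact b.linearIndependent.map' U.subtype (by simp)
    · have : Set.range (fun i => (b i : Fin n → K)) = U.subtype '' Set.range b := by
        rw [← Set.range_comp]; rfl
      rw [this, Submodule.span_image, b.span_eq]
      simp
  · exact ⟨0, fun h' => absurd h' h⟩

theorem one_le_finrank_inf_iff {K : Type*} [Field K] {n : ℕ} (U W : Submodule K (Fin n → K)) :
    1 ≤ Module.finrank K ↥(U ⊓ W) ↔ ¬ Disjoint U W := by
  rw [disjoint_iff, ← Submodule.finrank_eq_zero (R := K)]
  omega

/-- Bollobás-type bound. -/
theorem bollobas_half {K : Type*} [Field K] {n k : ℕ} (hk : 1 ≤ k) {J : Type*} [Fintype J]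
    (U W : J → Submodule K (Fin n → K))
    (hU : ∀ j, Module.finrank K (U j) = k) (hW : ∀ j, Module.finrank K (W j) = k)
    (hUU : ∀ i j, ¬ Disjoint (U i) (U j)) (hd : ∀ i, Disjoint (U i) (W i))
    (hUW : ∀ i j, i ≠ j → ¬ Disjoint (U i) (W j)) :
    Fintype.card J ≤ (2 * k - 1).choose (k - 1) := by
  classical
  choose F hF using fun V : Submodule K (Fin n → K) => exists_frame (k := k) V
  have key : ∀ A B : Submodule K (Fin n → K), Module.finrank K A = k → Module.finrank K B = k →
      (genDet (Sum.elim (F A) (F B)) ≠ 0 ↔ Disjoint A B) := by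
    intro A B hA hB
    rw [genDet_ne_zero_iff, linearIndependent_sum]
    simp [Function.comp_def, (hF A hA).1, (hF B hB).1, (hF A hA).2, (hF B hB).2]
  let P : Submodule K (Fin n → K) → Fin k → (Fin k ⊕ Fin k →
      MvPolynomial (Fin n × (Fin k ⊕ Fin k)) K) :=
    fun A => genMat (Fin k ⊕ Fin k) (F A)
  have key2 : ∀ A B : Submodule K (Fin n → K), Module.finrank K A = k → Module.finrank K B = k →
      (detForm (P B) (P A) ≠ 0 ↔ Disjoint A B) := by
    intro A B hA hB
    rw [← key A B hA hB, genDet_eq_detForm]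
  have z : ∀ A B : Submodule K (Fin n → K), Module.finrank K A = k → Module.finrank K B = k →
      ¬ Disjoint A B → detForm (P B) (P A) = 0 := by
    intro A B hA hB h
    by_contra h'
    exact h ((key2 A B hA hB).1 h')
  let f : J ⊕ J → _ := fun x => detForm (P (Sum.elim W U x))
  have hf : LinearIndependent (MvPolynomial (Fin n × (Fin k ⊕ Fin k)) K) f := by
    rw [Fintype.linearIndependent_iff]
    intro g hg
    have hev : ∀ a, ∑ j, g (Sum.inl j) * detForm (P (W j)) a
        + ∑ j, g (Sum.inr j) * detForm (P (U j)) a = 0 := by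
      intro a
      let ev : ((Fin k ⊕ Fin k → MvPolynomial (Fin n × (Fin k ⊕ Fin k)) K) [⋀^Fin k]→ₗ[
          MvPolynomial (Fin n × (Fin k ⊕ Fin k)) K] MvPolynomial (Fin n × (Fin k ⊕ Fin k)) K) →+
          MvPolynomial (Fin n × (Fin k ⊕ Fin k)) K :=
        { toFun := fun φ => φ a, map_zero' := rfl, map_add' := fun _ _ => rfl }
      have := congrArg ev hg
      rw [map_sum, Fintype.sum_sum_type] at this
      exact this
    have h1 : ∀ i, g (Sum.inl i) = 0 := by
      intro i
      have h := hev (P (U i))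
      rw [Finset.sum_eq_single i, Finset.sum_eq_zero, add_zero] at h
      · exact (mul_eq_zero.1 h).resolve_right ((key2 _ _ (hU i) (hW i)).2 (hd i))
      · intro j _
        rw [z _ _ (hU i) (hU j) (hUU i j), mul_zero]
      · intro j _ hj
        rw [z _ _ (hU i) (hW j) (hUW i j hj.symm), mul_zero]
      · simp
    have h2 : ∀ i, g (Sum.inr i) = 0 := by
      intro i
      have h := hev (P (W i))
      simp only [h1, zero_mul, Finset.sum_const_zero, zero_add] at h
      rw [Finset.sum_eq_single i] at h
      · exact (mul_eq_zero.1 h).resolve_right ((key2 _ _ (hW i) (hU i)).2 (hd i).symm)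
      · intro j _ hj
        rw [z _ _ (hW i) (hU j) (fun h => hUW j i hj h.symm), mul_zero]
      · simp
    rintro (i | i)
    · exact h1 i
    · exact h2 i
  have hc := card_le_of_linInd_alternating f hf
  simp only [Fintype.card_sum, Fintype.card_fin] at hc
  obtain ⟨m, rfl⟩ : ∃ m, k = m + 1 := ⟨k - 1, by omega⟩
  have e1 : (m + 1 + (m + 1)).choose (m + 1)
      = (2 * m + 1).choose m + (2 * m + 1).choose (m + 1) := by
    rw [show m + 1 + (m + 1) = (2 * m + 1) + 1 by ring, Nat.choose_succ_succ]
  have e2 : (2 * m + 1).choose (m + 1) = (2 * m + 1).choose m :=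
    Nat.choose_symm_half m
  rw [show 2 * (m + 1) - 1 = 2 * m + 1 by omega, show m + 1 - 1 = m by omega]
  omega

theorem maximal_intersecting_family_of_subspaces_has_small_generating_set
    (q n k : ℕ) (hq : IsPrimePow q) (hk : 1 ≤ k) (hkn : k < n)
    (K : Type) [Field K] [Fintype K] (hK : Fintype.card K = q)
    (𝓕 : Finset (Submodule K (Fin n → K)))
    (hdim : ∀ U ∈ 𝓕, Module.finrank K ↥U = k) (hint : IsIntersectingFam 𝓕)
    (hmax : ∀ 𝓖 : Finset (Submodule K (Fin n → K)),
      (∀ U ∈ 𝓖, Module.finrank K ↥U = k) → IsIntersectingFam 𝓖 → 𝓕 ⊆ 𝓖 → 𝓕 = 𝓖) :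
    ∃ 𝓕₀ ⊆ 𝓕, 𝓕₀.card ≤ (2 * k - 1).choose (k - 1) ∧
      ∀ W : Submodule K (Fin n → K),
        W ∈ 𝓕 ↔ (Module.finrank K ↥W = k ∧ ∀ U ∈ 𝓕₀, 1 ≤ Module.finrank K ↥(W ⊓ U)) := by
  classical
  let P : Finset (Submodule K (Fin n → K)) → Prop := fun 𝓖 => 𝓖 ⊆ 𝓕 ∧
    ∀ W : Submodule K (Fin n → K), Module.finrank K ↥W = k →
      (∀ U ∈ 𝓖, 1 ≤ Module.finrank K ↥(W ⊓ U)) → W ∈ 𝓕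
  have hP : P 𝓕 := by
    refine ⟨subset_rfl, fun W hW h => ?_⟩
    have := hmax (insert W 𝓕) ?_ ?_ (Finset.subset_insert _ _)
    · rw [this]; exact Finset.mem_insert_self _ _
    · intro U hU
      rcases Finset.mem_insert.1 hU with rfl | hU
      · exact hW
      · exact hdim U hU
    · intro A hA B hB
      rcases Finset.mem_insert.1 hA with rfl | hA' <;> rcases Finset.mem_insert.1 hB with rfl | hB'
      · rw [inf_idem, hW]; exact hk
      · exact h B hB'
      · rw [inf_comm]; exact h A hA'
      · exact hint A hA' B hB'
  obtain ⟨𝓖, hG⟩ := exists_minimal_of_wellFoundedLT P ⟨𝓕, hP⟩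
  obtain ⟨⟨hsub, hgen⟩, hmin⟩ := hG
  refine ⟨𝓖, hsub, ?_, fun W => ⟨fun hW => ⟨hdim W hW, fun U hU => hint W hW U (hsub hU)⟩,
    fun h => hgen W h.1 h.2⟩⟩
  have hex : ∀ U : 𝓖, ∃ W : Submodule K (Fin n → K), Module.finrank K W = k ∧
      Disjoint U.1 W ∧ ∀ V ∈ 𝓖, V ≠ U.1 → ¬ Disjoint V W := by
    intro U
    by_contra hno
    have hPe : P (𝓖.erase U.1) := by
      refine ⟨(Finset.erase_subset _ _).trans hsub, fun W hW h => ?_⟩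
      by_contra hWF
      apply hno
      have h' : ∀ V ∈ 𝓖, V ≠ U.1 → ¬ Disjoint V W := by
        intro V hV hVU
        rw [disjoint_comm]
        exact (one_le_finrank_inf_iff _ _).1 (h V (Finset.mem_erase.2 ⟨hVU, hV⟩))
      refine ⟨W, hW, ?_, h'⟩
      by_contra hnd
      apply hWF
      refine hgen W hW fun V hV => ?_
      rw [one_le_finrank_inf_iff, disjoint_comm]
      by_cases hVU : V = U.1
      · rw [hVU]; exact hnd
      · exact h' V hV hVU
    have := hmin hPe (Finset.erase_subset _ _) U.2
    simp at this
  choose W hW1 hW2 hW3 using hex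
  have := bollobas_half hk (fun U : 𝓖 => U.1) W (fun U => hdim _ (hsub U.2)) hW1
    (fun A B => (one_le_finrank_inf_iff _ _).1 (hint _ (hsub A.2) _ (hsub B.2))) hW2
    (fun A B hAB => hW3 B A.1 A.2 (fun h => hAB (Subtype.ext h)))
  simpa using this
end
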